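/- (Remark 4) Let γ̄_B > 0 and consider Φ(R_B, R_E) = (R_B − R_E) e^{−(2^{R_B}−1)/γ̄_B} (2^{R_E} − 1) on the region 0 < R_E < R_B. A point (R_B, R_E) in this region is a critical point of Φ (both partial derivatives vanish) if and only if it satisfies the pair of equations R_E = R_B − γ̄_B/(2^{R_B} ln 2) and R_B = R_E + (2^{R_E} − 1)/(2^{R_E} ln 2). -/

import Mathlib

open Real

/-- Remark 4 (Eqs. (36)–(37)): on the region `0 < R_E < R_B`, a point `(R_B, R_E)` is a
critical point of `Φ(R_B, R_E) = (R_B − R_E) e^{−(2^{R_B}−1)/γ̄_B} (2^{R_E} − 1)` (both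
partial derivatives vanish) iff it satisfies the pair of fixed-point equations. -/
theorem est_fixed_rate_high_snr_critical_point
    (γB : ℝ) (hγB : 0 < γB) (RB RE : ℝ) (hRE : 0 < RE) (hRERB : RE < RB)
    (Φ : ℝ → ℝ → ℝ)
    (hΦ : ∀ rB rE : ℝ, Φ rB rE =
      (rB - rE) * Real.exp (-((2 : ℝ) ^ rB - 1) / γB) * ((2 : ℝ) ^ rE - 1)) :
    (deriv (fun rB : ℝ => Φ rB RE) RB = 0 ∧ deriv (fun rE : ℝ => Φ RB rE) RE = 0)
      ↔ (RE = RB - γB / ((2 : ℝ) ^ RB * Real.log 2)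
          ∧ RB = RE + ((2 : ℝ) ^ RE - 1) / ((2 : ℝ) ^ RE * Real.log 2)) := by
  have hL : 0 < Real.log 2 := Real.log_pos (by norm_num)
  have hpow : ∀ x : ℝ, HasDerivAt (fun r : ℝ => (2 : ℝ) ^ r) ((2 : ℝ) ^ x * Real.log 2) x := by
    intro x
    have h := (hasDerivAt_id x).const_rpow (a := (2 : ℝ)) (by norm_num)
    exact h.congr_deriv (by simp only [id]; ring)
  have hB : (0 : ℝ) < (2 : ℝ) ^ RB := by positivity
  have hE : (0 : ℝ) < (2 : ℝ) ^ RE := by positivity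
  have hE1 : (1 : ℝ) < (2 : ℝ) ^ RE := Real.one_lt_rpow (by norm_num) hRE
  have d1 := ((((hasDerivAt_id RB).sub_const RE).mul
    ((((hpow RB).sub_const 1).neg.div_const γB).exp)).mul_const ((2 : ℝ) ^ RE - 1))
  have d2 := ((((hasDerivAt_id RE).const_sub RB).mul_const
    (Real.exp (-((2 : ℝ) ^ RB - 1) / γB))).mul ((hpow RE).sub_const 1))
  have e1 : deriv (fun rB : ℝ => Φ rB RE) RB =
      Real.exp (-((2 : ℝ) ^ RB - 1) / γB) * ((2 : ℝ) ^ RE - 1) *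
        (1 - (RB - RE) * ((2 : ℝ) ^ RB * Real.log 2) / γB) := by
    simp only [hΦ]
    refine (d1.deriv).trans ?_
    simp
    ring
  have e2 : deriv (fun rE : ℝ => Φ RB rE) RE =
      Real.exp (-((2 : ℝ) ^ RB - 1) / γB) *
        ((RB - RE) * ((2 : ℝ) ^ RE * Real.log 2) - ((2 : ℝ) ^ RE - 1)) := by
    simp only [hΦ]
    refine (d2.deriv).trans ?_
    simp
    ring
  have hx := (Real.exp_pos (-((2 : ℝ) ^ RB - 1) / γB)).ne'
  have hE2 : (2 : ℝ) ^ RE - 1 ≠ 0 := (sub_pos.2 hE1).ne'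
  rw [e1, e2, mul_eq_zero_iff_left (mul_ne_zero hx hE2), mul_eq_zero_iff_left hx]
  have pB := mul_pos hB hL
  have pE := mul_pos hE hL
  generalize (2 : ℝ) ^ RB * Real.log 2 = a at *
  generalize (2 : ℝ) ^ RE * Real.log 2 = b at *
  apply and_congr
  · rw [sub_eq_zero, eq_comm, div_eq_one_iff_eq hγB.ne', ← eq_div_iff pB.ne']
    constructor <;> intro h <;> linarith
  · rw [sub_eq_zero, ← eq_div_iff pE.ne']
    constructor <;> intro h <;> linarith
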